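/- For the 4n-parametric family of Lie brackets on ℝ^{4n} and a fixed α (writing 1̄=4α−3, 2̄=4α−2, 3̄=4α−1, 4̄=4α), the sectional curvatures of the two basic holomorphic 2-planes coincide, k(X_1̄,X_3̄) = k(X_2̄,X_4̄), if and only if λ_1̄² + λ_4̄² = λ_2̄² + λ_3̄² (the condition for constant holomorphic sectional curvatures). -/

import Mathlib

noncomputable section

/-- The signature of the basis vectors inside each block: `(+, +, -, -)`. -/
def sgn : Fin 4 → ℝ := ![1, 1, -1, -1]

/-- Structure constants of the bracket inside one block, depending on the four
parameters `l 0 = λ_1̄`, `l 1 = λ_2̄`, `l 2 = λ_3̄`, `l 3 = λ_4̄`: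
`sc l r s` is the coordinate vector of `[X_r, X_s]`. -/
def sc (l : Fin 4 → ℝ) : Fin 4 → Fin 4 → Fin 4 → ℝ :=
  ![![![0, 0, 0, 0], ![0, 0, l 1, -l 0], ![0, l 1, 0, l 3], ![0, -l 0, -l 3, 0]],
    ![![0, 0, -l 1, l 0], ![0, 0, 0, 0], ![-l 1, 0, 0, -l 2], ![l 0, 0, l 2, 0]],
    ![![0, -l 1, 0, -l 3], ![l 1, 0, 0, l 2], ![0, 0, 0, 0], ![-l 3, l 2, 0, 0]],
    ![![0, l 0, l 3, 0], ![-l 0, 0, -l 2, 0], ![l 3, -l 2, 0, 0], ![0, 0, 0, 0]]]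

/-- `V n = ℝ^{4n}`, with coordinates indexed by a block `α : Fin n` and an
offset `r : Fin 4` (offset `r` corresponds to the basis vector `X_{4α+r+1}`,
i.e. `r = 0,1,2,3` correspond to `1̄,2̄,3̄,4̄`). -/
abbrev V (n : ℕ) : Type := Fin n × Fin 4 → ℝ

/-- The `4n`-parametric family of brackets on `ℝ^{4n}`: bilinear, vanishing on
pairs of basis vectors from different blocks, and given inside each block `α`
by the structure constants `sc` with parameters `λ_{4α+1},…,λ_{4α+4}`. -/
def brk {n : ℕ} (lam : Fin n × Fin 4 → ℝ) (x y : V n) : V n := fun p =>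
  ∑ r : Fin 4, ∑ s : Fin 4,
    x (p.1, r) * y (p.1, s) * sc (fun t => lam (p.1, t)) r s p.2

/-- The standard basis vectors `X_i` of `ℝ^{4n}`. -/
def X {n : ℕ} (i : Fin n × Fin 4) : V n := fun j => if j = i then 1 else 0

/-- The Norden metric `g`: the standard basis is orthogonal with
`g(X_1̄,X_1̄) = g(X_2̄,X_2̄) = 1`, `g(X_3̄,X_3̄) = g(X_4̄,X_4̄) = -1` in each block. -/
def gf {n : ℕ} (x y : V n) : ℝ := ∑ p : Fin n × Fin 4, sgn p.2 * x p * y p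

/-- The almost complex structure `J`: `J X_1̄ = X_3̄`, `J X_2̄ = X_4̄`,
`J X_3̄ = -X_1̄`, `J X_4̄ = -X_2̄` in each block. -/
def Jm {n : ℕ} (x : V n) : V n := fun p =>
  ![-x (p.1, 2), -x (p.1, 3), x (p.1, 0), x (p.1, 1)] p.2

/-- The curvature tensor `R(x,y,z,u) = −¼ g([x,y],[z,u])`. -/
def Rc {n : ℕ} (lam : Fin n × Fin 4 → ℝ) (x y z u : V n) : ℝ :=
  -(1 / 4) * gf (brk lam x y) (brk lam z u)

/-- The sectional curvature `k(x,y) = R(x,y,y,x)/(g(x,x)g(y,y) − g(x,y)²)`. -/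
def sect {n : ℕ} (lam : Fin n × Fin 4 → ℝ) (x y : V n) : ℝ :=
  Rc lam x y y x / (gf x x * gf y y - gf x y ^ 2)

/-!
The bracket is antisymmetric, so `R(x,y,y,x) = ¼ g([x,y],[x,y])`. Since `[X_r,X_s]` stays in the
block of `X_r` and `X_s`, the curvature of a coordinate plane is, up to a factor `±¼`, a signed sum
of squares of structure constants. On the two holomorphic planes the bracket has only two nonzero
coordinates, one spacelike and one timelike, so each curvature is a quarter of a difference of two
squares `λ_i²`.
-/

section

variable {n : ℕ} (lam : Fin n × Fin 4 → ℝ) (α : Fin n) (r s : Fin 4)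

theorem gf_neg_right (x y : V n) : gf x (-y) = -gf x y := by
  simp [gf]

theorem gf_X_left (i : Fin n × Fin 4) (y : V n) : gf (X i) y = sgn i.2 * y i := by
  simp [gf, X]

theorem gf_X_self (i : Fin n × Fin 4) : gf (X i) (X i) = sgn i.2 := by
  simp [gf_X_left, X]

theorem gf_X_of_ne {i j : Fin n × Fin 4} (h : i ≠ j) : gf (X i) (X j) = 0 := by
  simp [gf_X_left, X, h]

theorem gf_eq_sum_of_eq_zero_off_block {α : Fin n} {x : V n}
    (hx : ∀ p : Fin n × Fin 4, p.1 ≠ α → x p = 0) (y : V n) :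
    gf x y = ∑ t, sgn t * x (α, t) * y (α, t) := by
  rw [gf, Fintype.sum_prod_type]
  refine Fintype.sum_eq_single α fun β hβ => Finset.sum_eq_zero fun t _ => ?_
  rw [hx (β, t) hβ, mul_zero, zero_mul]

theorem sc_swap (l : Fin 4 → ℝ) (r s t : Fin 4) : sc l s r t = -sc l r s t := by
  fin_cases r <;> fin_cases s <;> fin_cases t <;> simp [sc]

theorem brk_swap (x y : V n) : brk lam y x = -brk lam x y := by
  funext p
  simp only [brk, Pi.neg_apply, ← Finset.sum_neg_distrib]
  rw [Finset.sum_comm]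
  refine Finset.sum_congr rfl fun r _ => Finset.sum_congr rfl fun s _ => ?_
  rw [sc_swap _ r s]
  ring

theorem brk_X_X_apply (p : Fin n × Fin 4) :
    brk lam (X (α, r)) (X (α, s)) p =
      if p.1 = α then sc (fun t => lam (α, t)) r s p.2 else 0 := by
  obtain ⟨β, t⟩ := p
  by_cases h : β = α
  · subst h
    simp [brk, X]
  · simp [brk, X, h]

theorem Rc_eq_gf_brk_self (x y : V n) :
    Rc lam x y y x = gf (brk lam x y) (brk lam x y) / 4 := by
  rw [Rc, brk_swap lam x y, gf_neg_right]
  ring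

theorem gf_brk_X_X_self :
    gf (brk lam (X (α, r)) (X (α, s))) (brk lam (X (α, r)) (X (α, s))) =
      ∑ t, sgn t * sc (fun t => lam (α, t)) r s t ^ 2 := by
  rw [gf_eq_sum_of_eq_zero_off_block (α := α)
    fun p hp => by rw [brk_X_X_apply, if_neg hp]]
  refine Finset.sum_congr rfl fun t _ => ?_
  rw [brk_X_X_apply, if_pos rfl]
  ring

variable {r s} in
theorem sect_X_X_of_ne (h : r ≠ s) :
    sect lam (X (α, r)) (X (α, s)) =
      (∑ t, sgn t * sc (fun t => lam (α, t)) r s t ^ 2) / 4 / (sgn r * sgn s) := by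
  have hne : (α, r) ≠ (α, s) := fun h' => h (congrArg Prod.snd h')
  rw [sect, Rc_eq_gf_brk_self, gf_brk_X_X_self, gf_X_self, gf_X_self, gf_X_of_ne hne,
    zero_pow two_ne_zero, sub_zero]

theorem sect_X_zero_X_two :
    sect lam (X (α, 0)) (X (α, 2)) = (lam (α, 3) ^ 2 - lam (α, 1) ^ 2) / 4 := by
  have norm_brk : ∑ t, sgn t * sc (fun t => lam (α, t)) 0 2 t ^ 2 =
      lam (α, 1) ^ 2 - lam (α, 3) ^ 2 := by
    simp [Fin.sum_univ_four, sgn, sc, sub_eq_add_neg]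
  have norm_plane : sgn 0 * sgn 2 = -1 := by simp [sgn]
  rw [sect_X_X_of_ne lam α (by decide), norm_brk, norm_plane]
  ring

theorem sect_X_one_X_three :
    sect lam (X (α, 1)) (X (α, 3)) = (lam (α, 2) ^ 2 - lam (α, 0) ^ 2) / 4 := by
  have norm_brk : ∑ t, sgn t * sc (fun t => lam (α, t)) 1 3 t ^ 2 =
      lam (α, 0) ^ 2 - lam (α, 2) ^ 2 := by
    simp [Fin.sum_univ_four, sgn, sc, sub_eq_add_neg]
  have norm_plane : sgn 1 * sgn 3 = -1 := by simp [sgn]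
  rw [sect_X_X_of_ne lam α (by decide), norm_brk, norm_plane]
  ring

end

/-- the sectional curvatures of the two basic holomorphic
2-planes `span{X_1̄,X_3̄}` and `span{X_2̄,X_4̄}` coincide if and only if
`λ_1̄² + λ_4̄² = λ_2̄² + λ_3̄²` (the condition for constant holomorphic
sectional curvatures). -/
theorem holomorphic_sectional_condition {n : ℕ} (hn : 1 ≤ n)
    (lam : Fin n × Fin 4 → ℝ) :
    ∀ α : Fin n,
      sect lam (X (α, 0)) (X (α, 2)) = sect lam (X (α, 1)) (X (α, 3)) ↔
        lam (α, 0) ^ 2 + lam (α, 3) ^ 2 = lam (α, 1) ^ 2 + lam (α, 2) ^ 2 := by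
  intro α
  rw [sect_X_zero_X_two, sect_X_one_X_three]
  constructor <;> intro h <;> linarith
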